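/- For any classification theory T, any D ⊆ F(T), any classifier κ on T and any envelope X under (D,κ), there exists a surrogate function σ_X : F(T) → C such that (1) σ_X(y) = κ(y) for all y ∈ D, and (2) for all x ∈ D and all E ∈ X with E ⊆ x, E is a weak abductive explanation of the question (T, σ_X, F(T), x). -/

import Mathlib

/-- A classification theory: a finite set of features, a finite domain (with at
least two values) for each feature, and a finite set of at least two classes. -/
structure CTheory where
  F : Finset ℕ
  dom : ℕ → Finset ℕ
  dom_nontrivial : ∀ f ∈ F, 1 < (dom f).card
  C : Finset ℕ
  C_nontrivial : 2 ≤ C.card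

/-- A literal of a theory is a pair (feature, value) with the value in the
feature's domain. -/
def IsLiteral (T : CTheory) (l : ℕ × ℕ) : Prop :=
  l.1 ∈ T.F ∧ l.2 ∈ T.dom l.1

/-- A set of literals is consistent iff no feature gets two distinct values. -/
def ConsistentLits (S : Set (ℕ × ℕ)) : Prop :=
  ∀ l ∈ S, ∀ l' ∈ S, l.1 = l'.1 → l.2 = l'.2

/-- A partial assignment: a consistent set of literals (each feature occurs at
most once). -/
def IsPartialAssignment (T : CTheory) (E : Set (ℕ × ℕ)) : Prop :=
  (∀ l ∈ E, IsLiteral T l) ∧ ConsistentLits E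

/-- An instance: a partial assignment in which every feature occurs (exactly) once. -/
def IsInstance (T : CTheory) (x : Set (ℕ × ℕ)) : Prop :=
  IsPartialAssignment T x ∧ ∀ f ∈ T.F, ∃ v, (f, v) ∈ x

/-- The feature space of a theory: the set of all its instances. -/
def FeatureSpace (T : CTheory) : Set (Set (ℕ × ℕ)) := {x | IsInstance T x}

/-- A classifier maps every instance to a class. -/
def IsClassifier (T : CTheory) (κ : Set (ℕ × ℕ) → ℕ) : Prop :=
  ∀ x ∈ FeatureSpace T, κ x ∈ T.C

/-- A question (T, κ, D, x): κ is a classifier on T, D ⊆ F(T) and x ∈ D. -/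
def IsQuestion (T : CTheory) (κ : Set (ℕ × ℕ) → ℕ)
    (D : Set (Set (ℕ × ℕ))) (x : Set (ℕ × ℕ)) : Prop :=
  IsClassifier T κ ∧ D ⊆ FeatureSpace T ∧ x ∈ D

/-- An explainer maps every question (T, κ, D, x) to a set of sets of literals. -/
abbrev Explainer :=
  CTheory → (Set (ℕ × ℕ) → ℕ) → Set (Set (ℕ × ℕ)) → Set (ℕ × ℕ) → Set (Set (ℕ × ℕ))

/-- An explainer returns, on every question over T, a subset of E(T)
(the partial assignments of T). -/
def IsExplainer (L : Explainer) : Prop :=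
  ∀ T κ D x, IsQuestion T κ D x → ∀ E ∈ L T κ D x, IsPartialAssignment T E

/-- Feasibility: every explanation is part of the instance being explained. -/
def Feasibility (L : Explainer) : Prop :=
  ∀ T κ D x, IsQuestion T κ D x → ∀ E ∈ L T κ D x, E ⊆ x

/-- Validity: no explanation is contradicted within the dataset. -/
def Validity (L : Explainer) : Prop :=
  ∀ T κ D x, IsQuestion T κ D x → ∀ E ∈ L T κ D x,
    ¬ ∃ y ∈ D, E ⊆ y ∧ κ y ≠ κ x

/-- Success: every question receives at least one explanation. -/
def Success (L : Explainer) : Prop :=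
  ∀ T κ D x, IsQuestion T κ D x → (L T κ D x).Nonempty

/-- Coherence: explanations of instances with distinct classes are jointly
inconsistent. -/
def Coherence (L : Explainer) : Prop :=
  ∀ T κ D x x', IsQuestion T κ D x → IsQuestion T κ D x' → κ x ≠ κ x' →
    ∀ E ∈ L T κ D x, ∀ E' ∈ L T κ D x', ¬ ConsistentLits (E ∪ E')

/-- Irreducibility: no literal of an explanation can be removed
(witnessed in the dataset). -/
def Irreducibility (L : Explainer) : Prop :=
  ∀ T κ D x, IsQuestion T κ D x → ∀ E ∈ L T κ D x, ∀ l ∈ E,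
    ∃ x' ∈ D, κ x' ≠ κ x ∧ E \ {l} ⊆ x'

/-- Strong Irreducibility: no literal of an explanation can be removed
(witnessed in the feature space). -/
def StrongIrreducibility (L : Explainer) : Prop :=
  ∀ T κ D x, IsQuestion T κ D x → ∀ E ∈ L T κ D x, ∀ l ∈ E,
    ∃ x' ∈ FeatureSpace T, κ x' ≠ κ x ∧ E \ {l} ⊆ x'

/-- Completeness: every omitted candidate is invalidated within the dataset. -/
def Completeness (L : Explainer) : Prop :=
  ∀ T κ D x, IsQuestion T κ D x → ∀ E ⊆ x, E ∉ L T κ D x →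
    ∃ y ∈ D, E ⊆ y ∧ κ y ≠ κ x

/-- Strong Completeness: every omitted candidate is invalidated within the
feature space. -/
def StrongCompleteness (L : Explainer) : Prop :=
  ∀ T κ D x, IsQuestion T κ D x → ∀ E ⊆ x, E ∉ L T κ D x →
    ∃ y ∈ FeatureSpace T, E ⊆ y ∧ κ y ≠ κ x

/-- Monotonicity: enlarging the dataset preserves explanations. -/
def Monotonicity (L : Explainer) : Prop :=
  ∀ T κ D D' x, IsQuestion T κ D x → IsQuestion T κ D' x → D ⊆ D' →
    L T κ D x ⊆ L T κ D' x

/-- Counter-Monotonicity: enlarging the dataset can only discard explanations. -/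
def CounterMonotonicity (L : Explainer) : Prop :=
  ∀ T κ D D' x, IsQuestion T κ D x → IsQuestion T κ D' x → D ⊆ D' →
    L T κ D' x ⊆ L T κ D x

/-- The explainer L_dw returning all weak abductive explanations (dwAXp's):
E ⊆ x and every y ∈ D containing E has the same class as x. -/
def Ldw : Explainer := fun _T κ D x =>
  {E | E ⊆ x ∧ ∀ y ∈ D, E ⊆ y → κ y = κ x}

/-- The explainer L_w returning the weak abductive explanations computed on the
whole feature space. -/
def Lw : Explainer := fun T κ _D x => Ldw T κ (FeatureSpace T) x

/-- The explainer L_dc returning the subset-minimal weak abductive explanations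
(concise abductive explanations). -/
def Ldc : Explainer := fun T κ D x =>
  {E | E ∈ Ldw T κ D x ∧ ∀ E' ∈ Ldw T κ D x, E' ⊆ E → E' = E}

/-- A set X of partial assignments is coherent under (D, κ): no two of its
members are consistent together while being contained in instances of D with
distinct classes. -/
def CoherentSet (κ : Set (ℕ × ℕ) → ℕ) (D : Set (Set (ℕ × ℕ)))
    (X : Set (Set (ℕ × ℕ))) : Prop :=
  ¬ ∃ E ∈ X, ∃ E' ∈ X, ConsistentLits (E ∪ E') ∧
      ∃ y ∈ D, ∃ z ∈ D, E ⊆ y ∧ E' ⊆ z ∧ κ y ≠ κ z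

/-- An envelope under (D, κ): a coherent set of dwAXp's covering every instance
of D. -/
def IsEnvelope (T : CTheory) (κ : Set (ℕ × ℕ) → ℕ) (D : Set (Set (ℕ × ℕ)))
    (X : Set (Set (ℕ × ℕ))) : Prop :=
  (∀ E ∈ X, IsPartialAssignment T E) ∧
  CoherentSet κ D X ∧
  (∀ E ∈ X, ∃ x ∈ D, E ∈ Ldw T κ D x) ∧
  (∀ x ∈ D, ∃ E ∈ X, E ⊆ x)

/-- W: the union of all dwAXp's of all instances of the dataset. -/
def dwUnion (T : CTheory) (κ : Set (ℕ × ℕ) → ℕ) (D : Set (Set (ℕ × ℕ))) :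
    Set (Set (ℕ × ℕ)) :=
  {E | ∃ x ∈ D, E ∈ Ldw T κ D x}

/-- The two defining conditions of an irrefutable envelope (before maximality):
a set of dwAXp's none of which conflicts with any dwAXp. -/
def IrrCandidate (T : CTheory) (κ : Set (ℕ × ℕ) → ℕ) (D : Set (Set (ℕ × ℕ)))
    (X : Set (Set (ℕ × ℕ))) : Prop :=
  X ⊆ dwUnion T κ D ∧
  ∀ E ∈ X, ¬ ∃ E' ∈ dwUnion T κ D, ¬ CoherentSet κ D {E, E'}

/-- An irrefutable envelope under (D, κ): a subset-maximal set of mutually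
irrefutable dwAXp's. -/
def IsIrrefutableEnvelope (T : CTheory) (κ : Set (ℕ × ℕ) → ℕ)
    (D : Set (Set (ℕ × ℕ))) (X : Set (Set (ℕ × ℕ))) : Prop :=
  IrrCandidate T κ D X ∧ ∀ X', IrrCandidate T κ D X' → ¬ X ⊂ X'

/-- A coherent explainer: on every question, it returns the members of a fixed
envelope (the union of its outputs over the dataset) included in the instance. -/
def IsCoherentExplainer (L : Explainer) : Prop :=
  ∀ T κ D x, IsQuestion T κ D x →
    L T κ D x = {E | (∃ z ∈ D, E ∈ L T κ D z) ∧ E ⊆ x} ∧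
    IsEnvelope T κ D {E | ∃ z ∈ D, E ∈ L T κ D z}

/-!
Label an instance `y` by the class of any instance of `D` with which it has a member of `X` in
common, and by `κ y` if there is none. If `E` and `E'` are both contained in `y`, then `E ∪ E'` is
consistent because `y` is, so coherence makes the label independent of the choice. Hence all
instances that contain a given `E ∈ X` receive the same label, and since every instance of `D`
contains a member of `X`, the labels on `D` are those of `κ`.
-/

section Surrogate

variable {α β : Type*}

/-- Two sets share an explanation of `X` if some member of `X` is contained in both. This is the
relation along which the surrogate propagates classes from the dataset to the feature space. -/
def SharesExplanation (X : Set (Set α)) (y z : Set α) : Prop :=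
  ∃ E ∈ X, E ⊆ y ∧ E ⊆ z

open Classical in
/-- The surrogate function `σ_X`: a set that shares an explanation with members of `D` gets the
class of one of them, picked by choice, and any other set keeps its class under `κ`. -/
noncomputable def surrogate (κ : Set α → β) (D X : Set (Set α)) (y : Set α) : β :=
  if h : ∃ z ∈ D, SharesExplanation X y z then κ h.choose else κ y

variable {κ : Set α → β} {D X : Set (Set α)} {y : Set α}

theorem exists_surrogate_eq (h : ∃ z ∈ D, SharesExplanation X y z) :
    ∃ z ∈ D, SharesExplanation X y z ∧ surrogate κ D X y = κ z :=
  ⟨h.choose, h.choose_spec.1, h.choose_spec.2, dif_pos h⟩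

theorem surrogate_eq_self (h : ¬ ∃ z ∈ D, SharesExplanation X y z) :
    surrogate κ D X y = κ y :=
  dif_neg h

theorem mapsTo_surrogate {S : Set (Set α)} {C : Set β} (hκ : Set.MapsTo κ S C) (hD : D ⊆ S) :
    Set.MapsTo (surrogate κ D X) S C := by
  intro y hy
  by_cases h : ∃ z ∈ D, SharesExplanation X y z
  · obtain ⟨z, hz, -, hσ⟩ := exists_surrogate_eq (κ := κ) h
    exact hσ ▸ hκ (hD hz)
  · exact surrogate_eq_self (κ := κ) h ▸ hκ hy

end Surrogate

theorem ConsistentLits.mono {S S' : Set (ℕ × ℕ)} (hS' : ConsistentLits S') (h : S ⊆ S') :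
    ConsistentLits S :=
  fun l hl l' hl' => hS' l (h hl) l' (h hl')

section Coherent

variable {T : CTheory} {κ : Set (ℕ × ℕ) → ℕ} {D X : Set (Set (ℕ × ℕ))}
  {E w x y z : Set (ℕ × ℕ)}

theorem CoherentSet.eq_of_sharesExplanation (hX : CoherentSet κ D X) (hw : ConsistentLits w)
    (hy : y ∈ D) (hz : z ∈ D) (hwy : SharesExplanation X w y) (hwz : SharesExplanation X w z) :
    κ y = κ z := by
  obtain ⟨E, hE, hEw, hEy⟩ := hwy
  obtain ⟨E', hE', hE'w, hE'z⟩ := hwz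
  have hEE' : ConsistentLits (E ∪ E') := hw.mono (Set.union_subset hEw hE'w)
  by_contra hne
  exact hX ⟨E, hE, E', hE', hEE', y, hy, z, hz, hEy, hE'z, hne⟩

theorem CoherentSet.surrogate_eq (hX : CoherentSet κ D X) (hy : ConsistentLits y) (hz : z ∈ D)
    (hyz : SharesExplanation X y z) : surrogate κ D X y = κ z := by
  obtain ⟨z', hz', hyz', hσ⟩ := exists_surrogate_eq (κ := κ) ⟨z, hz, hyz⟩
  exact hσ.trans (hX.eq_of_sharesExplanation hy hz' hz hyz' hyz)

theorem CoherentSet.mem_Ldw_surrogate (hX : CoherentSet κ D X) (hD : D ⊆ FeatureSpace T)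
    (hx : x ∈ D) (hE : E ∈ X) (hEx : E ⊆ x) :
    E ∈ Ldw T (surrogate κ D X) (FeatureSpace T) x := by
  have hσ : ∀ y ∈ FeatureSpace T, E ⊆ y → surrogate κ D X y = κ x :=
    fun y hy hEy => hX.surrogate_eq hy.1.2 hx ⟨E, hE, hEy, hEx⟩
  exact ⟨hEx, fun y hy hEy => (hσ y hy hEy).trans (hσ x (hD hx) hEx).symm⟩

end Coherent

theorem surrogate_exists (T : CTheory) (κ : Set (ℕ × ℕ) → ℕ)
    (hκ : IsClassifier T κ) (D : Set (Set (ℕ × ℕ))) (hD : D ⊆ FeatureSpace T)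
    (X : Set (Set (ℕ × ℕ))) (hX : IsEnvelope T κ D X) :
    ∃ σ : Set (ℕ × ℕ) → ℕ, IsClassifier T σ ∧ (∀ y ∈ D, σ y = κ y) ∧
      ∀ x ∈ D, ∀ E ∈ X, E ⊆ x → E ∈ Ldw T σ (FeatureSpace T) x := by
  obtain ⟨-, hcoh, -, hcover⟩ := hX
  refine ⟨surrogate κ D X, mapsTo_surrogate hκ hD, fun y hy => ?_,
    fun x hx E hE hEx => hcoh.mem_Ldw_surrogate hD hx hE hEx⟩
  obtain ⟨E, hE, hEy⟩ := hcover y hy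
  exact hcoh.surrogate_eq (hD hy).1.2 hy ⟨E, hE, hEy, hEy⟩
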